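/- Let E be a measurable space, let μ_1, …, μ_n be probability measures on E, and for k = 2, …, n let T_k be a map from bounded measurable functions E → ℝ to bounded measurable functions E → ℝ. Let p ≥ 1, γ ≥ 1, β ≥ 1 and α > 0 with α γ^{2p−2} < 1. Define q̂_{j,k} = T_{j+1} ∘ ⋯ ∘ T_k for 1 ≤ j < k ≤ n (and q̂_{k,k} = id). Assume: (i) for every bounded measurable f and every k, ∫ |T_k f|^{2p} dμ_{k−1} ≤ α γ^{2p−2} ∫ |f|^{2p} dμ_k + β γ^{2p−2} (∫ |f|^p dμ_k)²; (ii) there is δ_p ≥ 1 such that ‖q̂_{j,k} f‖_{L^p(μ_j)} ≤ δ_p ‖f‖_{L^p(μ_k)} for all 1 ≤ j ≤ k ≤ n and bounded measurable f. Then for all 1 ≤ j ≤ k ≤ n and bounded measurable f: ‖q̂_{j,k} f‖_{L^{2p}(μ_j)} ≤ δ_p · (β γ^{2p−2} / (1 − α γ^{2p−2}))^{1/(2p)} · ‖f‖_{L^{2p}(μ_k)}. -/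

import Mathlib

open MeasureTheory

/-- A bounded measurable real-valued function. -/
def IsBddMeasurable {E : Type*} [MeasurableSpace E] (f : E → ℝ) : Prop :=
  Measurable f ∧ ∃ C : ℝ, ∀ x, |f x| ≤ C

/-- `qhat T j k = T (j+1) ∘ ⋯ ∘ T k` (the identity when `k ≤ j`). -/
def qhat {E : Type*} (T : ℕ → (E → ℝ) → (E → ℝ)) (j : ℕ) : ℕ → (E → ℝ) → (E → ℝ)
  | 0, f => f
  | k + 1, f => if j < k + 1 then qhat T j k (T (k + 1) f) else f

/-- The `L^p` norm `(∫ |f|^p dμ)^(1/p)`. -/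
noncomputable def Lnorm {E : Type*} [MeasurableSpace E] (μ : Measure E) (p : ℝ)
    (f : E → ℝ) : ℝ :=
  (∫ x, |f x| ^ p ∂μ) ^ (1 / p)

/-!
Since `‖f‖_{L^p}^{2p} = (∫ |f|^p)²`, stability in `L^p` turns the one-step estimate into an affine
recursion `u j ≤ a * u (j + 1) + c` for `u j = ‖q̂_{j,k} f‖_{L^{2p}(μ_j)}^{2p}`, with the constant
`c = b * (δ * ‖f‖_{L^{2p}(μ_k)})^{2p}` independent of `j`. Its fixed point `c / (1 - a)` dominates
the terminal value `u k`, hence every `u j`.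
-/

theorem le_div_one_sub_of_le_mul_succ_add {R : Type*} [Field R] [LinearOrder R]
    [IsStrictOrderedRing R] {a c : R} (ha₀ : 0 ≤ a) (ha₁ : a < 1) {u : ℕ → R} {j k : ℕ}
    (hjk : j ≤ k) (hu : ∀ i, j ≤ i → i < k → u i ≤ a * u (i + 1) + c) (hk : u k ≤ c / (1 - a)) :
    u j ≤ c / (1 - a) := by
  have h_fixed : a * (c / (1 - a)) + c = c / (1 - a) := by
    field_simp [(sub_pos.2 ha₁).ne']
    ring
  refine Nat.decreasingInduction' (P := fun i => u i ≤ c / (1 - a)) (fun i hik hji ih => ?_) hjk hk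
  calc u i ≤ a * u (i + 1) + c := hu i hji hik
    _ ≤ a * (c / (1 - a)) + c := by gcongr
    _ = c / (1 - a) := h_fixed

section qhat

variable {E : Type*} (T : ℕ → (E → ℝ) → (E → ℝ))

theorem qhat_self (j : ℕ) (f : E → ℝ) : qhat T j j f = f := by
  cases j <;> simp [qhat]

theorem qhat_succ_right {j k : ℕ} (hjk : j ≤ k) (f : E → ℝ) :
    qhat T j (k + 1) f = qhat T j k (T (k + 1) f) := by
  rw [qhat, if_pos (Nat.lt_succ_of_le hjk)]

theorem qhat_eq_apply_qhat_succ {j k : ℕ} (hjk : j < k) (f : E → ℝ) :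
    qhat T j k f = T (j + 1) (qhat T (j + 1) k f) := by
  induction k, hjk using Nat.le_induction generalizing f with
  | base => rw [qhat_succ_right T le_rfl, qhat_self, qhat_self]
  | succ k hjk ih =>
    rw [qhat_succ_right T (Nat.le_of_lt hjk), qhat_succ_right T hjk, ih]

end qhat

theorem IsBddMeasurable.qhat {E : Type*} [MeasurableSpace E] {T : ℕ → (E → ℝ) → (E → ℝ)}
    {j k : ℕ} (hT : ∀ i, j < i → i ≤ k → ∀ f, IsBddMeasurable f → IsBddMeasurable (T i f))
    (hjk : j ≤ k) {f : E → ℝ} (hf : IsBddMeasurable f) : IsBddMeasurable (qhat T j k f) := by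
  induction k, hjk using Nat.le_induction generalizing f with
  | base => rwa [qhat_self]
  | succ k hjk ih =>
    rw [qhat_succ_right T hjk]
    exact ih (fun i hji hik => hT i hji (hik.trans k.le_succ)) (hT _ (by lia) le_rfl f hf)

section Lnorm

variable {E : Type*} [MeasurableSpace E] {μ : Measure E} {p q : ℝ} {f : E → ℝ}

theorem IsBddMeasurable.memLp [IsFiniteMeasure μ] (hf : IsBddMeasurable f) (p : ENNReal) :
    MemLp f p μ := by
  obtain ⟨hf_meas, C, hC⟩ := hf
  exact .of_bound hf_meas.aestronglyMeasurable C (.of_forall hC)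

theorem integral_abs_rpow_nonneg : 0 ≤ ∫ x, |f x| ^ p ∂μ :=
  integral_nonneg fun _ => by positivity

theorem Lnorm_nonneg : 0 ≤ Lnorm μ p f :=
  Real.rpow_nonneg integral_abs_rpow_nonneg _

theorem Lnorm_rpow (hp : p ≠ 0) : Lnorm μ p f ^ p = ∫ x, |f x| ^ p ∂μ := by
  rw [Lnorm, one_div, Real.rpow_inv_rpow integral_abs_rpow_nonneg hp]

theorem Lnorm_rpow_two_mul (hp : p ≠ 0) :
    Lnorm μ p f ^ (2 * p) = (∫ x, |f x| ^ p ∂μ) ^ 2 := by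
  rw [mul_comm, Real.rpow_mul Lnorm_nonneg, Lnorm_rpow hp, Real.rpow_two]

theorem Lnorm_eq_toReal_eLpNorm (hp : 0 < p) (hf : AEStronglyMeasurable f μ) :
    Lnorm μ p f = (eLpNorm f (ENNReal.ofReal p) μ).toReal := by
  rw [toReal_eLpNorm hf, lpNorm_eq_integral_norm_rpow_toReal (by simpa using hp)
    ENNReal.ofReal_ne_top hf, ENNReal.toReal_ofReal hp.le, Lnorm, one_div]
  rfl

theorem Lnorm_le_Lnorm_of_exponent_le [IsProbabilityMeasure μ] (hp : 0 < p) (hpq : p ≤ q)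
    (hf : MemLp f (ENNReal.ofReal q) μ) : Lnorm μ p f ≤ Lnorm μ q f := by
  rw [Lnorm_eq_toReal_eLpNorm hp hf.aestronglyMeasurable,
    Lnorm_eq_toReal_eLpNorm (hp.trans_le hpq) hf.aestronglyMeasurable]
  exact ENNReal.toReal_mono hf.eLpNorm_ne_top
    (eLpNorm_le_eLpNorm_of_exponent_le (ENNReal.ofReal_le_ofReal hpq) hf.aestronglyMeasurable)

theorem Lnorm_rpow_two_mul_le_of_integral_le {ν : Measure E} {g : E → ℝ} {a b M : ℝ} (hp : 0 < p)
    (hb : 0 ≤ b) (hM : Lnorm μ p f ≤ M)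
    (h : ∫ x, |g x| ^ (2 * p) ∂ν ≤
      a * ∫ x, |f x| ^ (2 * p) ∂μ + b * (∫ x, |f x| ^ p ∂μ) ^ 2) :
    Lnorm ν (2 * p) g ^ (2 * p) ≤ a * Lnorm μ (2 * p) f ^ (2 * p) + b * M ^ (2 * p) := by
  have h2p : 2 * p ≠ 0 := by positivity
  rw [← Lnorm_rpow h2p, ← Lnorm_rpow h2p, ← Lnorm_rpow_two_mul hp.ne'] at h
  refine h.trans ?_
  gcongr
  exact Lnorm_nonneg

end Lnorm

theorem stmt_1_general {E : Type*} [MeasurableSpace E] (n : ℕ)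
    (μ : ℕ → Measure E) (hprob : ∀ k, 1 ≤ k → k ≤ n → IsProbabilityMeasure (μ k))
    (T : ℕ → (E → ℝ) → (E → ℝ)) {p a b δ : ℝ} (hp : 0 < p)
    (ha₀ : 0 ≤ a) (ha₁ : a < 1) (hab : 1 - a ≤ b) (hδ : 1 ≤ δ)
    (hT : ∀ k, 2 ≤ k → k ≤ n → ∀ f, IsBddMeasurable f → IsBddMeasurable (T k f))
    (hstep : ∀ k, 2 ≤ k → k ≤ n → ∀ f, IsBddMeasurable f →
      ∫ x, |T k f x| ^ (2 * p) ∂(μ (k - 1)) ≤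
        a * ∫ x, |f x| ^ (2 * p) ∂(μ k) + b * (∫ x, |f x| ^ p ∂(μ k)) ^ 2)
    (hq : ∀ j k, 1 ≤ j → j ≤ k → k ≤ n → ∀ f, IsBddMeasurable f →
      Lnorm (μ j) p (qhat T j k f) ≤ δ * Lnorm (μ k) p f)
    (j k : ℕ) (hj : 1 ≤ j) (hjk : j ≤ k) (hkn : k ≤ n) (f : E → ℝ) (hf : IsBddMeasurable f) :
    Lnorm (μ j) (2 * p) (qhat T j k f) ≤
      δ * (b / (1 - a)) ^ (1 / (2 * p)) * Lnorm (μ k) (2 * p) f := by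
  have := hprob k (hj.trans hjk) hkn
  have h2p : 0 < 2 * p := by positivity
  have ha : 0 < 1 - a := sub_pos.2 ha₁
  have hb : 0 < b := ha.trans_le hab
  set L := Lnorm (μ k) (2 * p) f
  have hL : 0 ≤ L := Lnorm_nonneg
  have h_Lp (i : ℕ) (hi : 1 ≤ i) (hik : i ≤ k) : Lnorm (μ i) p (qhat T i k f) ≤ δ * L :=
    (hq i k hi hik hkn f hf).trans <| by
      gcongr
      exact Lnorm_le_Lnorm_of_exponent_le hp (by linarith) (hf.memLp _)
  have h_rec (i : ℕ) (hji : j ≤ i) (hik : i < k) :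
      Lnorm (μ i) (2 * p) (qhat T i k f) ^ (2 * p) ≤
        a * Lnorm (μ (i + 1)) (2 * p) (qhat T (i + 1) k f) ^ (2 * p) + b * (δ * L) ^ (2 * p) := by
    have hf_succ : IsBddMeasurable (qhat T (i + 1) k f) :=
      hf.qhat (fun m him hmk => hT m (by lia) (hmk.trans hkn)) hik
    rw [qhat_eq_apply_qhat_succ T hik]
    exact Lnorm_rpow_two_mul_le_of_integral_le hp hb.le (h_Lp (i + 1) (by lia) hik)
      (hstep (i + 1) (by lia) (by lia) _ hf_succ)
  have h_end : Lnorm (μ k) (2 * p) (qhat T k k f) ^ (2 * p) ≤ b * (δ * L) ^ (2 * p) / (1 - a) := by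
    rw [qhat_self, mul_div_right_comm]
    calc L ^ (2 * p) ≤ (δ * L) ^ (2 * p) := by
          gcongr
          exact le_mul_of_one_le_left hL hδ
      _ ≤ b / (1 - a) * (δ * L) ^ (2 * p) :=
          le_mul_of_one_le_left (by positivity) ((one_le_div ha).2 hab)
  have h_root : (δ * (b / (1 - a)) ^ (1 / (2 * p)) * L) ^ (2 * p) =
      b * (δ * L) ^ (2 * p) / (1 - a) := by
    rw [mul_right_comm, Real.mul_rpow (by positivity) (by positivity), one_div,
      Real.rpow_inv_rpow (by positivity) h2p.ne']
    ring
  rw [← Real.rpow_le_rpow_iff Lnorm_nonneg (by positivity) h2p, h_root]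
  exact le_div_one_sub_of_le_mul_succ_add ha₀ ha₁ hjk h_rec h_end

theorem stmt_1 {E : Type*} [MeasurableSpace E] (n : ℕ)
    (μ : ℕ → Measure E) (hprob : ∀ k, 1 ≤ k → k ≤ n → IsProbabilityMeasure (μ k))
    (T : ℕ → (E → ℝ) → (E → ℝ))
    (p γ β α δp : ℝ) (hp : 1 ≤ p) (hγ : 1 ≤ γ) (hβ : 1 ≤ β) (hα : 0 < α)
    (hαγ : α * γ ^ (2 * p - 2) < 1) (hδp : 1 ≤ δp)
    (hTbdd : ∀ k, 2 ≤ k → k ≤ n → ∀ f, IsBddMeasurable f → IsBddMeasurable (T k f))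
    (hstep : ∀ k, 2 ≤ k → k ≤ n → ∀ f, IsBddMeasurable f →
      ∫ x, |T k f x| ^ (2 * p) ∂(μ (k - 1)) ≤
        α * γ ^ (2 * p - 2) * ∫ x, |f x| ^ (2 * p) ∂(μ k)
          + β * γ ^ (2 * p - 2) * (∫ x, |f x| ^ p ∂(μ k)) ^ 2)
    (hq : ∀ j k, 1 ≤ j → j ≤ k → k ≤ n → ∀ f, IsBddMeasurable f →
      Lnorm (μ j) p (qhat T j k f) ≤ δp * Lnorm (μ k) p f) :
    ∀ j k, 1 ≤ j → j ≤ k → k ≤ n → ∀ f, IsBddMeasurable f →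
      Lnorm (μ j) (2 * p) (qhat T j k f) ≤
        δp * (β * γ ^ (2 * p - 2) / (1 - α * γ ^ (2 * p - 2))) ^ (1 / (2 * p)) *
          Lnorm (μ k) (2 * p) f := by
  have hγ' : 1 ≤ γ ^ (2 * p - 2) := Real.one_le_rpow hγ (by linarith)
  have hab : 1 - α * γ ^ (2 * p - 2) ≤ β * γ ^ (2 * p - 2) := by nlinarith
  exact stmt_1_general n μ hprob T (by positivity) (by positivity) hαγ hab hδp hTbdd hstep hq
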